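/- arXiv:2202.06775 — 2 statements merged into one kernel-verified Lean document; each statement's English description precedes it below -/
import Mathlib

section
/- Let a_0, a_1, b_0, b_1 ∈ ℝ² and define the bilinear interpolation X(s, t) = (1−t)((1−s) a_0 + s a_1) + t((1−s) b_0 + s b_1) for (s, t) ∈ [0,1]². Then ∫_0^1 ∫_0^1 det(∂_s X(s,t), ∂_t X(s,t)) dt ds = det( ((a_1 − a_0) + (b_1 − b_0))/2 , ((b_0 − a_0) + (b_1 − a_1))/2 ), where for u = (u_1, u_2), v = (v_1, v_2) ∈ ℝ² one sets det(u, v) = u_1 v_2 − u_2 v_1. -/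
theorem deriv_affine_aux (p q : ℝ × ℝ) (x : ℝ) :
    deriv (fun y : ℝ => p + y • q) x = q := by
  have h : HasDerivAt (fun y : ℝ => p + y • q) ((1 : ℝ) • q) x :=
    ((hasDerivAt_id x).smul_const q).const_add p
  simpa using h.deriv

theorem integral_affine_aux (c k : ℝ) :
    (∫ x in (0:ℝ)..1, (c + k * x)) = c + k / 2 := by
  rw [intervalIntegral.integral_add (by simp)
    (Continuous.intervalIntegrable (by fun_prop) _ _)]
  have h : (∫ x in (0:ℝ)..1, k * x) = k * ∫ x in (0:ℝ)..1, x :=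
    intervalIntegral.integral_const_mul k (fun x => x)
  rw [h, integral_id]
  simp
  ring

/-- The signed area swept by a segment moving by linear interpolation from
`[a₀,a₁]` to `[b₀,b₁]` equals the determinant of the averaged edge vector with
the averaged displacement (per-element `d = 2` content of Lemma 3.1). -/
theorem stmt9 (a0 a1 b0 b1 : ℝ × ℝ)
    (X : ℝ → ℝ → ℝ × ℝ)
    (hX : ∀ s t, X s t =
      (1 - t) • ((1 - s) • a0 + s • a1) + t • ((1 - s) • b0 + s • b1))
    (det2 : ℝ × ℝ → ℝ × ℝ → ℝ)
    (hdet : ∀ u v : ℝ × ℝ, det2 u v = u.1 * v.2 - u.2 * v.1) :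
    (∫ s in (0:ℝ)..1, ∫ t in (0:ℝ)..1,
        det2 (deriv (fun s' => X s' t) s) (deriv (fun t' => X s t') t)) =
      det2 ((2:ℝ)⁻¹ • ((a1 - a0) + (b1 - b0))) ((2:ℝ)⁻¹ • ((b0 - a0) + (b1 - a1))) := by
  have h1 : ∀ s t, deriv (fun s' => X s' t) s = (1 - t) • (a1 - a0) + t • (b1 - b0) := by
    intro s t
    rw [← deriv_affine_aux ((1 - t) • a0 + t • b0) ((1 - t) • (a1 - a0) + t • (b1 - b0)) s]
    congr 1
    funext y
    rw [hX]
    module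
  have h2 : ∀ s t, deriv (fun t' => X s t') t = (1 - s) • (b0 - a0) + s • (b1 - a1) := by
    intro s t
    rw [← deriv_affine_aux ((1 - s) • a0 + s • a1) ((1 - s) • (b0 - a0) + s • (b1 - a1)) t]
    congr 1
    funext y
    rw [hX]
    module
  simp only [h1, h2, hdet]
  obtain ⟨p0, q0⟩ := a0
  obtain ⟨p1, q1⟩ := a1
  obtain ⟨r0, w0⟩ := b0
  obtain ⟨r1, w1⟩ := b1
  simp only [Prod.fst_add, Prod.snd_add, Prod.smul_fst, Prod.smul_snd, Prod.fst_sub,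
    Prod.snd_sub, smul_eq_mul]
  have inner : ∀ s : ℝ, (∫ t in (0:ℝ)..1,
      (((1 - t) * (p1 - p0) + t * (r1 - r0)) * ((1 - s) * (w0 - q0) + s * (w1 - q1)) -
       ((1 - t) * (q1 - q0) + t * (w1 - w0)) * ((1 - s) * (r0 - p0) + s * (r1 - p1)))) =
      (((p1 - p0) + (r1 - r0)) / 2 * (w0 - q0) - ((q1 - q0) + (w1 - w0)) / 2 * (r0 - p0)) +
      (((p1 - p0) + (r1 - r0)) / 2 * ((w1 - q1) - (w0 - q0)) -
        ((q1 - q0) + (w1 - w0)) / 2 * ((r1 - p1) - (r0 - p0))) * s := by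
    intro s
    set A := (1 - s) * (w0 - q0) + s * (w1 - q1) with hA
    set B := (1 - s) * (r0 - p0) + s * (r1 - p1) with hB
    have e := integral_affine_aux ((p1 - p0) * A - (q1 - q0) * B)
      (((r1 - r0) - (p1 - p0)) * A - ((w1 - w0) - (q1 - q0)) * B)
    trans
    · refine Eq.trans ?_ e
      congr 1
      funext t
      ring
    · rw [hA, hB]
      ring
  simp only [inner]
  rw [integral_affine_aux]
  ring
end

section
/- Let A and B be real 3×2 matrices such that Bᵀ B = I₂, the 2×2 identity matrix. Then tr(Aᵀ(A − B)) ≥ √(det(Aᵀ A)) − 1. -/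
open Matrix

/-- Per-element form of the stability estimate (3.23): if `B` is a real `3×2`
matrix with orthonormal columns (`BᵀB = I₂`) and `A` is any real `3×2` matrix,
then `tr(Aᵀ(A - B)) ≥ √(det(AᵀA)) - 1`. -/
theorem stmt12 (A B : Matrix (Fin 3) (Fin 2) ℝ) (hB : Bᵀ * B = 1) :
    Real.sqrt (Aᵀ * A).det - 1 ≤ (Aᵀ * (A - B)).trace := by
  have h0 := congrFun (congrFun hB 0) 0
  have h1 := congrFun (congrFun hB 1) 1
  simp [Matrix.mul_apply, Fin.sum_univ_three] at h0 h1
  have hs : Real.sqrt (Aᵀ * A).det ≤ ((Aᵀ * A) 0 0 + (Aᵀ * A) 1 1) / 2 := by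
    apply Real.sqrt_le_iff.mpr
    have hsym : (Aᵀ * A) 1 0 = (Aᵀ * A) 0 1 := by
      simp [Matrix.mul_apply, Fin.sum_univ_three]; ring
    constructor
    · simp only [Matrix.mul_apply, Fin.sum_univ_three, Matrix.transpose_apply, ← sq]
      positivity
    · rw [Matrix.det_fin_two, hsym]
      nlinarith [sq_nonneg ((Aᵀ * A) 0 0 - (Aᵀ * A) 1 1), sq_nonneg ((Aᵀ * A) 0 1)]
  simp only [Matrix.mul_apply, Fin.sum_univ_three, Matrix.transpose_apply] at hs
  simp only [Matrix.trace_fin_two, Matrix.mul_apply, Fin.sum_univ_three, Matrix.transpose_apply,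
    Matrix.sub_apply]
  nlinarith [sq_nonneg (A 0 0 - B 0 0), sq_nonneg (A 1 0 - B 1 0), sq_nonneg (A 2 0 - B 2 0),
    sq_nonneg (A 0 1 - B 0 1), sq_nonneg (A 1 1 - B 1 1), sq_nonneg (A 2 1 - B 2 1)]
end
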